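/- arXiv:2509.11383 — 6 statements merged into one kernel-verified Lean document; each statement's English description precedes it below -/
import Mathlib

section
/- If 0 < r₁ < r₂ < 1, γ₁ > 0, γ₂ > 0 and r₁·γ₁ ≤ r₂·γ₂, then for every τ ≥ 0 one has K₁(τ) ≤ K₂(τ), where K_i(τ) = μ·((r_i−1)·τ − (r_i/γ_i)·(1 − e^{−γ_i τ})). -/
theorem aux_pointwise (r₁ r₂ γ₁ γ₂ τ : ℝ) (hr₁ : 0 < r₁) (hr₁₂ : r₁ < r₂)
    (hκ : r₁ * γ₁ ≤ r₂ * γ₂) (hτ : 0 ≤ τ) :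
    r₁ * (1 - Real.exp (-γ₁ * τ)) ≤ r₂ * (1 - Real.exp (-γ₂ * τ)) := by
  have h2 : 0 < r₂ := hr₁.trans hr₁₂
  have ha : r₁ / r₂ ≤ 1 := by rw [div_le_one h2]; exact hr₁₂.le
  have hc := convexOn_exp.2 (Set.mem_univ (-γ₁ * τ)) (Set.mem_univ (0:ℝ))
    (div_pos hr₁ h2).le (sub_nonneg.2 ha) (by ring)
  simp only [smul_eq_mul, mul_zero, add_zero, Real.exp_zero, mul_one] at hc
  have hle : -γ₂ * τ ≤ r₁ / r₂ * (-γ₁ * τ) := by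
    have : r₁ / r₂ * γ₁ ≤ γ₂ := by
      rw [div_mul_eq_mul_div, div_le_iff₀ h2]; linarith
    nlinarith
  have h := (Real.exp_le_exp.2 hle).trans hc
  have h' := mul_le_mul_of_nonneg_left h h2.le
  have e : r₂ * (r₁ / r₂ * Real.exp (-γ₁ * τ) + (1 - r₁ / r₂))
      = r₁ * Real.exp (-γ₁ * τ) + r₂ - r₁ := by
    field_simp
    ring
  rw [e] at h'
  linarith

theorem aux_deriv (r γ τ : ℝ) (hγ : 0 < γ) :
    HasDerivAt (fun τ => (r - 1) * τ - (r / γ) * (1 - Real.exp (-γ * τ)))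
      (r * (1 - Real.exp (-γ * τ)) - 1) τ := by
  have h1 : HasDerivAt (fun τ : ℝ => -γ * τ) (-γ) τ := by
    simpa using (hasDerivAt_id τ).const_mul (-γ)
  have h2 : HasDerivAt (fun τ : ℝ => (r - 1) * τ) (r - 1) τ := by
    simpa using (hasDerivAt_id τ).const_mul (r - 1)
  refine (h2.sub ((h1.exp.const_sub 1).const_mul (r / γ))).congr_deriv ?_
  field_simp
  ring

/-- If `0 < r₁ < r₂ < 1`, `γ₁, γ₂ > 0` and the effective return rates satisfy
`r₁·γ₁ ≤ r₂·γ₂`, then the cumulative kernels satisfy `K₁(τ) ≤ K₂(τ)` for all `τ ≥ 0`. -/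
theorem cumulative_kernel_ordered
    (μ r₁ r₂ γ₁ γ₂ : ℝ) (hμ : 0 < μ)
    (hr₁ : 0 < r₁) (hr₁₂ : r₁ < r₂) (hr₂ : r₂ < 1)
    (hγ₁ : 0 < γ₁) (hγ₂ : 0 < γ₂)
    (hκ : r₁ * γ₁ ≤ r₂ * γ₂)
    (K₁ K₂ : ℝ → ℝ)
    (hK₁ : ∀ τ, K₁ τ = μ * ((r₁ - 1) * τ - (r₁ / γ₁) * (1 - Real.exp (-γ₁ * τ))))
    (hK₂ : ∀ τ, K₂ τ = μ * ((r₂ - 1) * τ - (r₂ / γ₂) * (1 - Real.exp (-γ₂ * τ)))) :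
    ∀ τ, 0 ≤ τ → K₁ τ ≤ K₂ τ := by
  intro τ hτ
  rw [hK₁, hK₂]
  refine mul_le_mul_of_nonneg_left ?_ hμ.le
  have hd := fun t => (aux_deriv r₂ γ₂ t hγ₂).sub (aux_deriv r₁ γ₁ t hγ₁)
  have hm := monotoneOn_of_deriv_nonneg (convex_Ici (0:ℝ))
    (fun t _ => (hd t).continuousAt.continuousWithinAt)
    (fun t _ => (hd t).differentiableAt.differentiableWithinAt)
    (fun t ht => by
      rw [interior_Ici] at ht
      rw [(hd t).deriv]
      have := aux_pointwise r₁ r₂ γ₁ γ₂ t hr₁ hr₁₂ hκ (le_of_lt ht)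
      linarith)
  have := hm (Set.mem_Ici.2 le_rfl) (Set.mem_Ici.2 hτ) hτ
  simp only [Pi.sub_apply, mul_zero, Real.exp_zero, sub_self] at this
  linarith
end

section
/- If 0 < r₁ < r₂ < 1, γ₁ > 0, γ₂ > 0 and r₁·γ₁ ≤ r₂·γ₂, then for every τ ≥ 0 one has r₂·(1 − e^{−γ₂τ}) − r₁·(1 − e^{−γ₁τ}) ≥ 0. -/
/-- If `0 < r₁ < r₂ < 1`, `γ₁, γ₂ > 0` and `r₁·γ₁ ≤ r₂·γ₂`, then
`r₂·(1 − e^{−γ₂τ}) − r₁·(1 − e^{−γ₁τ}) ≥ 0` for every `τ ≥ 0`. -/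
theorem F_deriv_nonneg
    (r₁ r₂ γ₁ γ₂ : ℝ)
    (hr₁ : 0 < r₁) (hr₁₂ : r₁ < r₂) (hr₂ : r₂ < 1)
    (hγ₁ : 0 < γ₁) (hγ₂ : 0 < γ₂)
    (hκ : r₁ * γ₁ ≤ r₂ * γ₂) :
    ∀ τ, 0 ≤ τ →
      0 ≤ r₂ * (1 - Real.exp (-γ₂ * τ)) - r₁ * (1 - Real.exp (-γ₁ * τ)) := by
  intro τ hτ
  have hr : 0 < r₂ := hr₁.trans hr₁₂
  have hl : 0 ≤ r₁ / r₂ := by positivity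
  have hl1 : r₁ / r₂ ≤ 1 := (div_le_one hr).2 hr₁₂.le
  have hc := convexOn_exp.2 (Set.mem_univ (-γ₁ * τ)) (Set.mem_univ (0 : ℝ)) hl
    (sub_nonneg.2 hl1) (by ring)
  simp only [smul_eq_mul, mul_zero, add_zero, Real.exp_zero, mul_one] at hc
  have hg : r₁ / r₂ * γ₁ ≤ γ₂ := by
    rw [div_mul_eq_mul_div, div_le_iff₀ hr]
    linarith
  have he : Real.exp (-γ₂ * τ) ≤ Real.exp (r₁ / r₂ * (-γ₁ * τ)) := by
    apply Real.exp_le_exp.2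
    have := mul_le_mul_of_nonneg_right hg hτ
    linarith
  have h := mul_le_mul_of_nonneg_left (he.trans hc) hr.le
  have e : r₂ * (r₁ / r₂ * Real.exp (-γ₁ * τ) + (1 - r₁ / r₂))
      = r₁ * Real.exp (-γ₁ * τ) + (r₂ - r₁) := by
    field_simp
  rw [e] at h
  linarith
end

section
/- Suppose 0 < r₁ < r₂ < 1, γ₁, γ₂ > 0, μ > 0 and r₁·γ₁ ≤ r₂·γ₂. Then for every τ ≥ 0 and every pair of allocations u₁, u₂ ≥ 0 with u₁ + u₂ ≤ 1, one has u₁·K₁(τ) + u₂·K₂(τ) ≥ K₁(τ), where K_i(τ) = μ·((r_i−1)·τ − (r_i/γ_i)·(1 − e^{−γ_i τ})). That is, devoting full capacity to class 1 pointwise minimizes the Hamiltonian coefficient sum over the capacity simplex. -/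
/-- When `κ₁ = r₁γ₁ ≤ r₂γ₂ = κ₂`, devoting full capacity to class 1 pointwise
minimizes `u₁·K₁(τ) + u₂·K₂(τ)` over the capacity simplex
`{(u₁,u₂) : u₁,u₂ ≥ 0, u₁+u₂ ≤ 1}`: every feasible allocation satisfies
`u₁·K₁(τ) + u₂·K₂(τ) ≥ K₁(τ)`. -/
theorem full_priority_minimizes_hamiltonian
    (μ r₁ r₂ γ₁ γ₂ : ℝ) (hμ : 0 < μ)
    (hr₁ : 0 < r₁) (hr₁₂ : r₁ < r₂) (hr₂ : r₂ < 1)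
    (hγ₁ : 0 < γ₁) (hγ₂ : 0 < γ₂)
    (hκ : r₁ * γ₁ ≤ r₂ * γ₂)
    (K₁ K₂ : ℝ → ℝ)
    (hK₁ : ∀ τ, K₁ τ = μ * ((r₁ - 1) * τ - (r₁ / γ₁) * (1 - Real.exp (-γ₁ * τ))))
    (hK₂ : ∀ τ, K₂ τ = μ * ((r₂ - 1) * τ - (r₂ / γ₂) * (1 - Real.exp (-γ₂ * τ)))) :
    ∀ τ, 0 ≤ τ → ∀ u₁ u₂ : ℝ, 0 ≤ u₁ → 0 ≤ u₂ → u₁ + u₂ ≤ 1 →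
      K₁ τ ≤ u₁ * K₁ τ + u₂ * K₂ τ := by
  intro τ hτ u₁ u₂ hu₁ hu₂ hu
  have h1 : K₁ τ ≤ 0 := by
    rw [hK₁]
    have he : Real.exp (-γ₁ * τ) ≤ 1 := Real.exp_le_one_iff.mpr (by nlinarith)
    have hd : 0 ≤ (r₁ / γ₁) * (1 - Real.exp (-γ₁ * τ)) :=
      mul_nonneg (by positivity) (by linarith)
    have hc : 0 ≤ (1 - r₁) * τ := mul_nonneg (by linarith) hτ
    exact mul_nonpos_of_nonneg_of_nonpos hμ.le (by linarith)
  have key : ∀ x : ℝ, 0 ≤ x →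
      0 ≤ r₂ * (1 - Real.exp (-γ₂ * x)) - r₁ * (1 - Real.exp (-γ₁ * x)) := by
    intro x hx
    have hr2 : 0 < r₂ := hr₁.trans hr₁₂
    have ha : 0 ≤ r₁ / r₂ := by positivity
    have ha1 : 0 ≤ 1 - r₁ / r₂ := by
      rw [sub_nonneg, div_le_one hr2]; exact hr₁₂.le
    have hcv := convexOn_exp.2 (Set.mem_univ (-γ₁ * x)) (Set.mem_univ 0) ha ha1 (by ring)
    simp only [smul_eq_mul, mul_zero, add_zero, Real.exp_zero, mul_one] at hcv
    have hle : r₁ / r₂ * γ₁ ≤ γ₂ := by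
      rw [div_mul_eq_mul_div, div_le_iff₀ hr2]; linarith
    have hmono : Real.exp (-γ₂ * x) ≤ Real.exp (r₁ / r₂ * (-γ₁ * x)) :=
      Real.exp_le_exp.mpr (by nlinarith [mul_le_mul_of_nonneg_right hle hx])
    have h3 := mul_le_mul_of_nonneg_left (hmono.trans hcv) hr2.le
    have h4 : r₂ * (r₁ / r₂ * Real.exp (-γ₁ * x) + (1 - r₁ / r₂))
        = r₁ * Real.exp (-γ₁ * x) + (r₂ - r₁) := by field_simp
    linarith
  have hder : ∀ (r γ : ℝ), 0 < γ → ∀ x : ℝ,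
      HasDerivAt (fun x => (r - 1) * x - (r / γ) * (1 - Real.exp (-γ * x)))
        ((r - 1) - r * Real.exp (-γ * x)) x := by
    intro r γ hγ x
    have e1 : HasDerivAt (fun x : ℝ => -γ * x) (-γ) x := by
      simpa using (hasDerivAt_id x).const_mul (-γ)
    have e2 : HasDerivAt (fun x : ℝ => (r - 1) * x) (r - 1) x := by
      simpa using (hasDerivAt_id x).const_mul (r - 1)
    have e3 := e2.sub ((e1.exp.const_sub 1).const_mul (r / γ))
    have e4 : (r - 1) - r * Real.exp (-γ * x)
        = (r - 1) - r / γ * -(Real.exp (-γ * x) * -γ) := by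
      have : r / γ * γ = r := div_mul_cancel₀ r hγ.ne'
      linear_combination (Real.exp (-γ * x)) * this
    rw [e4]
    exact e3
  have h2 : K₁ τ ≤ K₂ τ := by
    have hd := fun x => (hder r₂ γ₂ hγ₂ x).sub (hder r₁ γ₁ hγ₁ x)
    have hm := monotoneOn_of_deriv_nonneg (convex_Ici (0 : ℝ))
      (fun x _ => (hd x).continuousAt.continuousWithinAt)
      (fun x _ => (hd x).differentiableAt.differentiableWithinAt)
      (fun x hx => by
        rw [(hd x).deriv]
        have := key x (interior_subset hx)
        linarith)
    have h := hm (Set.mem_Ici.mpr le_rfl) (Set.mem_Ici.mpr hτ) hτ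
    simp at h
    rw [hK₁, hK₂]
    apply mul_le_mul_of_nonneg_left _ hμ.le
    simp only [neg_mul]
    linarith
  nlinarith [mul_nonneg hu₂ (sub_nonneg.mpr h2), mul_nonneg (sub_nonneg.mpr hu) (neg_nonneg.mpr h1)]
end

section
/- Fix r ∈ (0,1) and γ > 0. For x > 0 let t(x) be the unique nonnegative solution of x = (1−r)·t + (r/γ)·(1 − e^{−γt}), and set a(x) = r·(1 − e^{−γ·t(x)}). Then, as x → 0⁺, a(x) = r·γ·x − ((1−r)·r·γ²/2)·x² + O(x³). -/
open Filter Asymptotics Topology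

/-- Taylor expansion of the residual allocation as `x → 0⁺`:
`a(x) = rγx − ((1−r)rγ²/2)x² + O(x³)`, where `a(x) = r(1 − e^{−γ·t(x)})` and
`t(x)` is the unique nonnegative solution of `x = (1−r)t + (r/γ)(1 − e^{−γt})`. -/
theorem residual_allocation_expansion
    (r γ : ℝ) (hr0 : 0 < r) (hr1 : r < 1) (hγ : 0 < γ)
    (t : ℝ → ℝ)
    (ht : ∀ x, 0 < x → 0 ≤ t x ∧
      x = (1 - r) * t x + (r / γ) * (1 - Real.exp (-γ * t x)))
    (a : ℝ → ℝ)
    (ha : ∀ x, a x = r * (1 - Real.exp (-γ * t x))) :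
    (fun x => a x - (r * γ * x - ((1 - r) * r * γ ^ 2 / 2) * x ^ 2))
      =O[𝓝[>] (0:ℝ)] (fun x => x ^ 3) := by
  have h1r : 0 < 1 - r := by linarith
  apply IsBigO.of_bound (2 * γ ^ 3 / (1 - r) ^ 3)
  have hmem : Set.Ioo (0:ℝ) ((1 - r) / γ) ∈ 𝓝[>] (0:ℝ) :=
    Ioo_mem_nhdsGT (div_pos h1r hγ)
  filter_upwards [hmem] with x hx
  obtain ⟨hx0, hx1⟩ := hx
  obtain ⟨ht0, hteq⟩ := ht x hx0
  rw [ha x]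
  have hu0 : 0 ≤ γ * t x := mul_nonneg hγ.le ht0
  have hy : γ * x = (1 - r) * (γ * t x) + r * (1 - Real.exp (-γ * t x)) := by
    have h := congrArg (fun z => γ * z) hteq
    refine h.trans ?_
    field_simp
  have hy1 : γ * x < 1 - r := by
    rw [lt_div_iff₀ hγ] at hx1
    linarith
  have hy0 : 0 < γ * x := mul_pos hγ hx0
  have hneg : -γ * t x = -(γ * t x) := by ring
  rw [hneg] at hy ⊢
  have hgoal : r * γ * x - (1 - r) * r * γ ^ 2 / 2 * x ^ 2
      = r * (γ * x) - (1 - r) * r / 2 * (γ * x) ^ 2 := by ring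
  have hR : 2 * γ ^ 3 / (1 - r) ^ 3 * ‖x ^ 3‖ = 2 * ((γ * x) / (1 - r)) ^ 3 := by
    rw [Real.norm_of_nonneg (by positivity)]
    field_simp
  rw [hgoal, hR]
  generalize γ * x = y at *
  generalize γ * t x = u at *
  have hE1 : 1 - Real.exp (-u) ≤ u := by linarith [Real.add_one_le_exp (-u)]
  have hE0 : 0 ≤ 1 - Real.exp (-u) := by
    have : Real.exp (-u) ≤ 1 := Real.exp_le_one_iff.2 (by linarith)
    linarith
  have huy : u ≤ y / (1 - r) := by
    rw [le_div_iff₀ h1r]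
    nlinarith [mul_nonneg hr0.le hE0]
  have hu1 : u ≤ 1 := huy.trans ((div_le_one h1r).2 hy1.le)
  have hb := Real.exp_bound (x := -u) (by rw [abs_neg, abs_of_nonneg hu0]; exact hu1)
    (n := 3) (by norm_num)
  rw [abs_neg, abs_of_nonneg hu0] at hb
  norm_num [Finset.sum_range_succ, Nat.factorial] at hb
  have hcube : u ^ 3 ≤ (y / (1 - r)) ^ 3 := pow_le_pow_left₀ hu0 huy 3
  refine le_trans ?_ (mul_le_mul_of_nonneg_left hcube (by norm_num))
  rw [Real.norm_eq_abs]
  obtain ⟨d, hd⟩ : ∃ d, d = (1 - Real.exp (-u)) - u + u ^ 2 / 2 := ⟨_, rfl⟩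
  have hu3 : 0 ≤ u ^ 3 := by positivity
  have hd2 : |d| ≤ u ^ 3 := by
    rw [abs_le] at hb ⊢
    constructor <;> linarith [hb.1, hb.2]
  generalize 1 - Real.exp (-u) = E at *
  have hyu : y ≤ u := by
    have h2 : r * E ≤ r * u := mul_le_mul_of_nonneg_left hE1 hr0.le
    linarith
  have hu23 : u ^ 3 ≤ u ^ 2 := pow_le_pow_of_le_one hu0 hu1 (by norm_num)
  have hEu : u - E ≤ 2 * u ^ 2 := by linarith [(abs_le.1 hd2).1, sq_nonneg u]
  have key : r * E - (r * y - (1 - r) * r / 2 * y ^ 2)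
      = (r * (1 - r)) * ((y ^ 2 - u ^ 2) / 2 + d) := by
    rw [hd, hy]; ring
  have hrr : r * (1 - r) ≤ 1 / 4 := by nlinarith [sq_nonneg (r - 1 / 2)]
  have hrr0 : 0 ≤ r * (1 - r) := by positivity
  have hsub : u - y ≤ 2 * u ^ 2 := by
    have : u - y = r * (u - E) := by rw [hy]; ring
    have h2 : r * (u - E) ≤ 1 * (u - E) :=
      mul_le_mul_of_nonneg_right hr1.le (by linarith)
    linarith
  have hA : u ^ 2 - y ^ 2 ≤ 4 * u ^ 3 := by
    have h1 : (u - y) * (u + y) ≤ (2 * u ^ 2) * (2 * u) :=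
      mul_le_mul hsub (by linarith) (by linarith) (by positivity)
    linarith [h1, (by ring : (u - y) * (u + y) = u ^ 2 - y ^ 2),
      (by ring : (2 * u ^ 2) * (2 * u) = 4 * u ^ 3)]
  have hB : 0 ≤ u ^ 2 - y ^ 2 := by
    have h1 : 0 ≤ (u - y) * (u + y) := mul_nonneg (by linarith) (by linarith)
    linarith [h1, (by ring : (u - y) * (u + y) = u ^ 2 - y ^ 2)]
  have hin : |(y ^ 2 - u ^ 2) / 2 + d| ≤ 3 * u ^ 3 := by
    rw [abs_le] at hd2 ⊢
    constructor <;> linarith [hd2.1, hd2.2]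
  rw [key, abs_mul, abs_of_nonneg hrr0]
  calc _ ≤ 1 / 4 * (3 * u ^ 3) := mul_le_mul hrr hin (abs_nonneg _) (by norm_num)
    _ ≤ 2 * u ^ 3 := by linarith
end

section
/- Fix r ∈ (0,1) and γ > 0. For x > 0 let t(x) be the unique nonnegative solution of x = (1−r)·t + (r/γ)·(1 − e^{−γt}), and define the scaled Stage-A cost c(x) = 2·x·t(x) − ((1−r)/2)·t(x)² − (r/γ)·(t(x) − (1 − e^{−γ·t(x)})/γ). Then, as x → 0⁺, c(x) = (3/2)·x² + (2/3)·γ·r·x³ + O(x⁴). -/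
open Filter Asymptotics Topology

/-- Expansion of the scaled Stage-A cost as `x → 0⁺`:
`c(x) = (3/2)x² + (2/3)γr·x³ + O(x⁴)`, where
`c(x) = 2x·t(x) − ((1−r)/2)t(x)² − (r/γ)(t(x) − (1 − e^{−γ·t(x)})/γ)` and
`t(x)` is the unique nonnegative solution of `x = (1−r)t + (r/γ)(1 − e^{−γt})`. -/
theorem stageA_cost_expansion_small
    (r γ : ℝ) (hr0 : 0 < r) (hr1 : r < 1) (hγ : 0 < γ)
    (t : ℝ → ℝ)
    (ht : ∀ x, 0 < x → 0 ≤ t x ∧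
      x = (1 - r) * t x + (r / γ) * (1 - Real.exp (-γ * t x)))
    (c : ℝ → ℝ)
    (hc : ∀ x, c x = 2 * x * t x - ((1 - r) / 2) * (t x) ^ 2
      - (r / γ) * (t x - (1 - Real.exp (-γ * t x)) / γ)) :
    (fun x => c x - ((3 / 2) * x ^ 2 + (2 / 3) * γ * r * x ^ 3))
      =O[𝓝[>] (0:ℝ)] (fun x => x ^ 4) := by
  
  set P : ℝ × ℝ → ℝ := fun p =>
    let T := p.1
    let v := p.2
    let w := r * γ ^ 2 / 6 - r * γ ^ 3 * T * v
    let z := -(r * γ) / 2 + T * w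
    2 * w - r * γ ^ 2 * v - 3 / 2 * ((r * γ) ^ 2 / 4 + 2 * w - r * γ * T * w + T ^ 2 * w ^ 2)
      - 2 / 3 * (r * γ) * (3 * z + 3 * T * z ^ 2 + T ^ 2 * z ^ 3) with hP
  have hPc : Continuous P := by
    simp only [hP]
    fun_prop
  obtain ⟨K, hK⟩ := ((isCompact_Icc (a := (0:ℝ)) (b := 1 / γ)).prod
    (isCompact_Icc (a := (-1:ℝ)) (b := 1))).exists_bound_of_continuousOn hPc.continuousOn
  have h1r : 0 < 1 - r := by linarith
  have hev : ∀ᶠ x in 𝓝[>] (0:ℝ), x ∈ Set.Ioo 0 ((1 - r) / γ) :=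
    Ioo_mem_nhdsGT (by positivity)
  refine IsBigO.of_bound (K / (1 - r) ^ 4) ?_
  filter_upwards [hev] with x hx
  obtain ⟨hx0, hx1⟩ := hx
  obtain ⟨ht0, hxt⟩ := ht x hx0
  rw [hc x]
  generalize t x = T at *
  have hT : 0 < T := by
    rcases ht0.lt_or_eq with h | h
    · exact h
    · rw [← h] at hxt
      simp at hxt
      linarith
  have hE : 0 ≤ (r / γ) * (1 - Real.exp (-γ * T)) := by
    have : Real.exp (-γ * T) ≤ 1 := Real.exp_le_one_iff.2 (by nlinarith)
    have : 0 ≤ 1 - Real.exp (-γ * T) := by linarith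
    positivity
  have hTx : (1 - r) * T ≤ x := by linarith
  have hTγ : T ≤ 1 / γ := by
    have h2 : (1 - r) * T ≤ (1 - r) * (1 / γ) := by
      rw [mul_one_div]; linarith
    exact le_of_mul_le_mul_left h2 h1r
  have hu : γ * T ≤ 1 := by
    rw [le_div_iff₀ hγ] at hTγ; linarith
  have hu0 : 0 < γ * T := by positivity
  have hexp := Real.exp_bound (x := -γ * T) (n := 4)
    (by rw [neg_mul, abs_neg, abs_of_pos hu0]; exact hu) (by norm_num)
  obtain ⟨v, hv⟩ : ∃ v, v = (Real.exp (-γ * T) -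
      (1 - γ * T + (γ * T) ^ 2 / 2 - (γ * T) ^ 3 / 6)) / (γ * T) ^ 4 := ⟨_, rfl⟩
  have hexpv : Real.exp (-γ * T) =
      1 - γ * T + (γ * T) ^ 2 / 2 - (γ * T) ^ 3 / 6 + (γ * T) ^ 4 * v := by
    rw [hv]; field_simp; ring
  have hvb : |v| ≤ 1 := by
    rw [hv, abs_div, abs_of_pos (pow_pos hu0 4), div_le_one (pow_pos hu0 4)]
    rw [neg_mul, abs_neg, abs_of_pos hu0] at hexp
    have h3 : ∑ m ∈ Finset.range 4, (-(γ * T)) ^ m / (m.factorial : ℝ)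
        = 1 - γ * T + (γ * T) ^ 2 / 2 - (γ * T) ^ 3 / 6 := by
      simp [Finset.sum_range_succ, Nat.factorial]; ring
    rw [h3] at hexp
    rw [neg_mul]
    refine hexp.trans ?_
    have := pow_pos hu0 4
    norm_num [Nat.factorial]
    linarith
  have hPb := hK (T, v) ⟨⟨ht0, hTγ⟩, abs_le.1 hvb⟩
  have key : 2 * x * T - ((1 - r) / 2) * T ^ 2
      - (r / γ) * (T - (1 - Real.exp (-γ * T)) / γ)
      - ((3 / 2) * x ^ 2 + (2 / 3) * γ * r * x ^ 3) = T ^ 4 * P (T, v) := by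
    rw [hexpv] at hxt ⊢
    have hx' : x = T - r * γ * T ^ 2 / 2 + T ^ 3 * (r * γ ^ 2 / 6 - r * γ ^ 3 * T * v) := by
      rw [hxt]; field_simp; ring
    have h4 : (r / γ) * (T - (1 - (1 - γ * T + (γ * T) ^ 2 / 2 - (γ * T) ^ 3 / 6
        + (γ * T) ^ 4 * v)) / γ) = r * T ^ 2 / 2 - r * γ * T ^ 3 / 6 + r * γ ^ 2 * T ^ 4 * v := by
      field_simp; ring
    rw [h4, hx']
    simp only [hP]
    ring
  rw [key, norm_mul, Real.norm_of_nonneg (pow_nonneg ht0 4),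
    Real.norm_of_nonneg (pow_nonneg hx0.le 4)]
  have hK0 : 0 ≤ K := (norm_nonneg _).trans hPb
  have h5 : ((1 - r) * T) ^ 4 ≤ x ^ 4 := pow_le_pow_left₀ (by positivity) hTx 4
  rw [mul_pow] at h5
  calc T ^ 4 * ‖P (T, v)‖ ≤ T ^ 4 * K := by gcongr
    _ = K / (1 - r) ^ 4 * ((1 - r) ^ 4 * T ^ 4) := by field_simp
    _ ≤ K / (1 - r) ^ 4 * x ^ 4 := by gcongr
end

section
/- Fix r ∈ (0,1), γ > 0, μ > 0. For ε > 0 let t(ε) be the unique nonnegative solution of ε = μ·((1−r)·t + (r/γ)·(1 − e^{−γt})), and define C^(A)(ε) = 2·ε·t(ε) − ((1−r)·μ/2)·t(ε)² − (r·μ/γ)·t(ε) + (r·μ/γ²)·(1 − e^{−γ·t(ε)}). Then, as ε → ∞, t(ε) = ε/((1−r)·μ) + O(1) and C^(A)(ε) = 3·ε²/(2·(1−r)·μ) + O(ε). -/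
open Filter Asymptotics

/-- Large-load asymptotics of the depletion time and the Stage-A cost as
`ε → ∞`: `t(ε) = ε/((1−r)μ) + O(1)` and `C^(A)(ε) = 3ε²/(2(1−r)μ) + O(ε)`,
where `t(ε)` is the unique nonnegative solution of
`ε = μ((1−r)t + (r/γ)(1 − e^{−γt}))` and
`C^(A)(ε) = 2ε·t(ε) − ((1−r)μ/2)t(ε)² − (rμ/γ)t(ε) + (rμ/γ²)(1 − e^{−γ·t(ε)})`. -/
theorem stageA_cost_expansion_large
    (r γ μ : ℝ) (hr0 : 0 < r) (hr1 : r < 1) (hγ : 0 < γ) (hμ : 0 < μ)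
    (t : ℝ → ℝ)
    (ht : ∀ ε, 0 < ε → 0 ≤ t ε ∧
      ε = μ * ((1 - r) * t ε + (r / γ) * (1 - Real.exp (-γ * t ε))))
    (CA : ℝ → ℝ)
    (hCA : ∀ ε, CA ε = 2 * ε * t ε - ((1 - r) * μ / 2) * (t ε) ^ 2
      - (r * μ / γ) * t ε + (r * μ / γ ^ 2) * (1 - Real.exp (-γ * t ε))) :
    ((fun ε => t ε - ε / ((1 - r) * μ)) =O[atTop] (fun _ => (1 : ℝ))) ∧
    ((fun ε => CA ε - 3 * ε ^ 2 / (2 * (1 - r) * μ)) =O[atTop] (fun ε => ε)) := by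
  obtain ⟨a, ha⟩ : ∃ a, a = (1 - r) * μ := ⟨_, rfl⟩
  obtain ⟨b, hb⟩ : ∃ b, b = r * μ / γ := ⟨_, rfl⟩
  have ha0 : 0 < a := by rw [ha]; exact mul_pos (by linarith) hμ
  have hb0 : 0 < b := by rw [hb]; positivity
  have key : ∀ ε, 1 ≤ ε → ∃ u, 0 ≤ u ∧ u ≤ 1 ∧ t ε = (ε - b * u) / a ∧
      CA ε = 2 * ε * t ε - a / 2 * (t ε) ^ 2 - b * t ε + b / γ * u := by
    intro ε hε
    obtain ⟨h0, h1⟩ := ht ε (by linarith)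
    refine ⟨1 - Real.exp (-γ * t ε), ?_, ?_, ?_, ?_⟩
    · have : Real.exp (-γ * t ε) ≤ 1 := Real.exp_le_one_iff.2 (by nlinarith)
      linarith
    · have := Real.exp_pos (-γ * t ε)
      linarith
    · rw [eq_div_iff ha0.ne']
      have h2 : μ * ((1 - r) * t ε + (r / γ) * (1 - Real.exp (-γ * t ε)))
          = a * t ε + b * (1 - Real.exp (-γ * t ε)) := by
        rw [ha, hb]; ring
      linarith
    · rw [hCA, ha, hb]
      have : r * μ / γ ^ 2 = r * μ / γ / γ := by field_simp
      rw [this]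
  constructor
  · refine IsBigO.of_bound (b / a) ?_
    filter_upwards [eventually_ge_atTop 1] with ε hε
    obtain ⟨u, hu0, hu1, h, -⟩ := key ε hε
    have e : t ε - ε / ((1 - r) * μ) = -(b / a * u) := by
      rw [h, ← ha]; ring
    have hba : 0 < b / a := by positivity
    rw [e, norm_neg, Real.norm_of_nonneg (by positivity), norm_one]
    nlinarith
  · refine IsBigO.of_bound (2 * (b / a) + 2 * (b * (b / a)) + b / γ) ?_
    filter_upwards [eventually_ge_atTop 1] with ε hε
    obtain ⟨u, hu0, hu1, h, hc⟩ := key ε hε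
    have e : CA ε - 3 * ε ^ 2 / (2 * (1 - r) * μ) =
        -(b / a) * (1 + u) * ε + b * (b / a) * (u - u ^ 2 / 2) + b / γ * u := by
      rw [hc, h, mul_assoc 2 (1 - r) μ, ← ha]
      field_simp
      ring
    have p1 : 0 < b / a := by positivity
    have p2 : 0 < b * (b / a) := by positivity
    have p3 : 0 < b / γ := by positivity
    rw [e, Real.norm_eq_abs, Real.norm_of_nonneg (by linarith)]
    generalize b * (b / a) = q at *
    generalize b / a = p at *
    generalize b / γ = w at *
    have i1 : p * (1 + u) * ε ≤ 2 * p * ε := by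
      apply mul_le_mul_of_nonneg_right _ (by linarith)
      nlinarith
    have i1' : 0 ≤ p * (1 + u) * ε := by positivity
    have i2 : 0 ≤ q * (u - u ^ 2 / 2) := mul_nonneg p2.le (by nlinarith)
    have i3 : q * (u - u ^ 2 / 2) ≤ q * ε := mul_le_mul_of_nonneg_left (by nlinarith) p2.le
    have i4 : 0 ≤ w * u := by positivity
    have i5 : w * u ≤ w * ε := mul_le_mul_of_nonneg_left (by linarith) p3.le
    have i6 : 0 ≤ q * ε := by positivity
    have i7 : 0 ≤ p * ε := by positivity
    rw [abs_le]
    constructor <;> nlinarith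
end
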